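/- Let f : V → ℝ be a nonzero linear functional on a finite-dimensional real vector space, A an alcove of a hyperplane arrangement containing the hyperplane H = {f = 0} among its walls, and P_t ⊂ ℝ^n a family of polytopes depending on a parameter t ∈ [0,1], given as P_t = {x : g_i(x) ≤ c_i + t·d_i, i ∈ I} for affine functionals g_i and constants c_i, d_i, such that P_1 has nonempty interior and P_0 is a polytope whose affine span has codimension k. Then Vol(P_t) = t^k · (V₀ + O(t)) for some V₀ > 0 as t → 0⁺; in particular the vanishing order of Vol(P_t) at t = 0 equals the codimension of the affine span of P_0. -/

import Mathlib

open MeasureTheory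

open Filter Topology Bornology Set
open scoped Pointwise

/-!
Recentre at a relative interior point of `P₀` and let `D` be the direction of its affine span. The
constraints active there vanish on `D`, so shrinking by `t` transversally to `D` (determinant
`t ^ codim D`) turns them into constraints independent of `t`, while each inactive constraint tends
to its restriction to `D`. Hence the rescaled polytopes converge, off the null set where some
inactive constraint becomes an equality in the limit, to a fixed set of positive finite measure.
They stay in a common bounded set because a polyhedron's recession cone does not depend on its
right-hand sides.
-/

/-- The solution set of the system of inequalities `f i x ≤ b i`; the `f i` are affine functionals,
or continuous linear ones once an origin has been chosen. -/
def polyhedron {F E I : Type*} [FunLike F E ℝ] (f : I → F) (b : I → ℝ) : Set E :=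
  {x | ∀ i, f i x ≤ b i}

section Affine

variable {E I : Type*} [AddCommGroup E] [Module ℝ E]

theorem exists_mem_polyhedron_forall_eq_of_eq [Finite I] {g : I → E →ᵃ[ℝ] ℝ} {c : I → ℝ}
    (hne : (polyhedron g c).Nonempty) :
    ∃ x ∈ polyhedron g c, ∀ i, g i x = c i → ∀ y ∈ polyhedron g c, g i y = c i := by
  obtain ⟨x, hx, hmin⟩ :=
    exists_minimalFor_of_wellFoundedLT (· ∈ polyhedron g c) (fun x ↦ {i | g i x = c i}) hne
  refine ⟨x, hx, fun i hi y hy ↦ ?_⟩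
  have hmid (j : I) : g j (midpoint ℝ x y) = (g j x + g j y) / 2 := by
    rw [AffineMap.map_midpoint, midpoint_eq_smul_add, smul_eq_mul, invOf_eq_inv]
    ring
  have hmem : midpoint ℝ x y ∈ polyhedron g c := fun j ↦ by
    linarith [hmid j, hx j, hy j]
  have hsub : {j | g j (midpoint ℝ x y) = c j} ⊆ {j | g j x = c j} := fun j hj ↦ by
    rw [mem_ofPred_eq, hmid] at hj
    exact le_antisymm (hx j) (by linarith [hy j])
  have hi' : g i (midpoint ℝ x y) = c i := hmin hmem hsub hi
  linarith [hmid i]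

theorem polyhedron_eq_vadd_polyhedron_linear [TopologicalSpace E] [IsTopologicalAddGroup E]
    [ContinuousSMul ℝ E] [T2Space E] [FiniteDimensional ℝ E]
    (g : I → E →ᵃ[ℝ] ℝ) (b : I → ℝ) (x : E) :
    polyhedron g b =
      x +ᵥ polyhedron (fun i ↦ (g i).linear.toContinuousLinearMap) (b - fun i ↦ g i x) := by
  ext y
  rw [mem_vadd_set_iff_neg_vadd_mem]
  refine forall_congr' fun i ↦ ?_
  have hlin : (g i).linear (-x +ᵥ y) = g i y - g i x := by
    rw [vadd_eq_add, neg_add_eq_sub, ← vsub_eq_sub, AffineMap.linearMap_vsub, vsub_eq_sub]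
  rw [LinearMap.coe_toContinuousLinearMap', hlin, Pi.sub_apply, sub_le_sub_iff_right]

end Affine

section Recession

variable {E I : Type*} [AddCommGroup E] [Module ℝ E] [TopologicalSpace E]

theorem isClosed_polyhedron (l : I → E →L[ℝ] ℝ) (b : I → ℝ) : IsClosed (polyhedron l b) := by
  simp only [polyhedron, ofPred_forall]
  exact isClosed_iInter fun i ↦ isClosed_le (l i).continuous continuous_const

theorem convex_polyhedron (l : I → E →L[ℝ] ℝ) (b : I → ℝ) : Convex ℝ (polyhedron l b) := by
  simp only [polyhedron, ofPred_forall]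
  exact convex_iInter fun i ↦ convex_halfSpace_le (l i).isLinear (b i)

theorem asymptoticCone_polyhedron [IsTopologicalAddGroup E] [ContinuousSMul ℝ E]
    {l : I → E →L[ℝ] ℝ} {b : I → ℝ} (hne : (polyhedron l b).Nonempty) :
    asymptoticCone ℝ (polyhedron l b) = polyhedron l 0 := by
  obtain ⟨x, hx⟩ := hne
  refine Subset.antisymm (fun u hu i ↦ ?_) fun u hu ↦ ?_
  · have hray (s : ℝ) (hs : 0 ≤ s) : s * l i u + l i x ≤ b i := by
      simpa using (convex_polyhedron l b).smul_vadd_mem_of_isClosed_of_mem_asymptoticCone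
        (isClosed_polyhedron l b) hs hu hx i
    by_contra! hpos
    have h := hray ((b i - l i x + 1) / l i u) (div_nonneg (by linarith [hx i]) hpos.le)
    rw [div_mul_cancel₀ _ hpos.ne'] at h
    linarith
  · have hray : Tendsto (fun s : ℝ ↦ s • u +ᵥ x) atTop (AffineSpace.asymptoticNhds ℝ E u) :=
      (tendsto_id.atTop_smul_const_tendsto_asymptoticNhds u).asymptoticNhds_vadd_const x
    refine hray.frequently (Eventually.frequently ?_)
    filter_upwards [eventually_ge_atTop 0] with s hs i
    have hsu : s * l i u ≤ 0 := mul_nonpos_of_nonneg_of_nonpos hs (hu i)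
    rw [vadd_eq_add, map_add, map_smul, smul_eq_mul]
    linarith [hx i]

theorem isBounded_polyhedron_iff {E : Type*} [NormedAddCommGroup E] [NormedSpace ℝ E]
    [FiniteDimensional ℝ E] {l : I → E →L[ℝ] ℝ} {b : I → ℝ} (hne : (polyhedron l b).Nonempty) :
    IsBounded (polyhedron l b) ↔ polyhedron l 0 ⊆ {0} := by
  rw [isBounded_iff_asymptoticCone_subset_singleton, asymptoticCone_polyhedron hne]

theorem isBounded_polyhedron_of_subset_singleton {E : Type*} [NormedAddCommGroup E]
    [NormedSpace ℝ E] [FiniteDimensional ℝ E] {l : I → E →L[ℝ] ℝ} (h : polyhedron l 0 ⊆ {0})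
    (b : I → ℝ) :
    IsBounded (polyhedron l b) := by
  rcases (polyhedron l b).eq_empty_or_nonempty with hempty | hne
  · rw [hempty]
    exact isBounded_empty
  · exact (isBounded_polyhedron_iff hne).2 h

end Recession

section ActiveKernel

variable {E I : Type*} [AddCommGroup E] [Module ℝ E] [TopologicalSpace E]

/-- The common kernel of the constraints of `polyhedron l a` that are active at the origin. When the
origin is a relative interior point, this is the direction of the affine span. -/
def activeKernel (l : I → E →L[ℝ] ℝ) (a : I → ℝ) : Submodule ℝ E :=
  ⨅ (i) (_ : a i = 0), LinearMap.ker (l i : E →ₗ[ℝ] ℝ)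

theorem mem_activeKernel {l : I → E →L[ℝ] ℝ} {a : I → ℝ} {v : E} :
    v ∈ activeKernel l a ↔ ∀ i, a i = 0 → l i v = 0 := by
  simp [activeKernel, Submodule.mem_iInf]

theorem exists_pos_smul_mem_polyhedron [Finite I] {l : I → E →L[ℝ] ℝ} {a : I → ℝ}
    (ha : ∀ i, 0 ≤ a i) {u : E} (hu : ∀ i, a i = 0 → l i u ≤ 0) :
    ∃ s : ℝ, 0 < s ∧ s • u ∈ polyhedron l a := by
  have hfeasible (i : I) : ∀ᶠ s : ℝ in 𝓝[>] 0, s * l i u ≤ a i := by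
    rcases (ha i).eq_or_lt with hi | hi
    · filter_upwards [self_mem_nhdsWithin] with s hs
      exact hi ▸ mul_nonpos_of_nonneg_of_nonpos (le_of_lt hs) (hu i hi.symm)
    · have hlim : Tendsto (fun s : ℝ ↦ s * l i u) (𝓝[>] 0) (𝓝 0) :=
        tendsto_nhdsWithin_of_tendsto_nhds (Continuous.tendsto' (by fun_prop) _ _ (zero_mul _))
      exact hlim.eventually_le_const hi
  obtain ⟨s, hs, hs0⟩ := ((eventually_all.2 hfeasible).and self_mem_nhdsWithin).exists
  exact ⟨s, hs0, fun i ↦ by simpa using hs i⟩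

theorem vectorSpan_polyhedron_eq_activeKernel [Finite I] {l : I → E →L[ℝ] ℝ} {a : I → ℝ}
    (ha : ∀ i, 0 ≤ a i) (hrel : polyhedron l a ⊆ activeKernel l a) :
    vectorSpan ℝ (polyhedron l a) = activeKernel l a := by
  have hzero : (0 : E) ∈ polyhedron l a := fun i ↦ by simpa using ha i
  have hspan : vectorSpan ℝ (polyhedron l a) = Submodule.span ℝ (polyhedron l a) := by
    simp [vectorSpan_eq_span_vsub_set_right ℝ hzero]
  rw [hspan]
  refine le_antisymm (Submodule.span_le.2 hrel) fun v hv ↦ ?_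
  obtain ⟨s, hs, hsv⟩ :=
    exists_pos_smul_mem_polyhedron ha fun i hi ↦ (mem_activeKernel.1 hv i hi).le
  exact (Submodule.smul_mem_iff _ hs.ne').1 (Submodule.subset_span hsv)

theorem exists_polyhedron_eq_vadd_of_nonempty [IsTopologicalAddGroup E] [ContinuousSMul ℝ E]
    [T2Space E] [FiniteDimensional ℝ E] [Finite I] {g : I → E →ᵃ[ℝ] ℝ} {c : I → ℝ}
    (hne : (polyhedron g c).Nonempty) :
    ∃ (x : E) (l : I → E →L[ℝ] ℝ) (a : I → ℝ), (∀ i, 0 ≤ a i) ∧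
      polyhedron l a ⊆ activeKernel l a ∧
      ∀ b, polyhedron g (c + b) = x +ᵥ polyhedron l (a + b) := by
  obtain ⟨x, hx, hactive⟩ := exists_mem_polyhedron_forall_eq_of_eq hne
  let l (i : I) : E →L[ℝ] ℝ := (g i).linear.toContinuousLinearMap
  let a : I → ℝ := c - fun i ↦ g i x
  have htranslate (b : I → ℝ) : polyhedron g (c + b) = x +ᵥ polyhedron l (a + b) := by
    rw [polyhedron_eq_vadd_polyhedron_linear g _ x, add_sub_right_comm]
  refine ⟨x, l, a, fun i ↦ sub_nonneg.2 (hx i), fun v hv ↦ mem_activeKernel.2 fun i hi ↦ ?_,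
    htranslate⟩
  have hxv : x +ᵥ v ∈ polyhedron g c := by
    have hc : polyhedron g c = x +ᵥ polyhedron l a := by simpa using htranslate 0
    exact hc ▸ vadd_mem_vadd_set hv
  have hgi : g i x = c i := (sub_eq_zero.1 hi).symm
  have hconst : g i (v +ᵥ x) = g i x := by
    rw [hgi, ← hactive i hgi _ hxv, vadd_eq_add, vadd_eq_add, add_comm]
  rw [AffineMap.map_vadd, vadd_eq_add, add_eq_right] at hconst
  exact hconst

end ActiveKernel

section Scaling

theorem det_add_smul_id_sub_of_isProj {K E : Type*} [Field K] [AddCommGroup E] [Module K E]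
    [FiniteDimensional K E] {D : Submodule K E} {p : E →ₗ[K] E} (hp : LinearMap.IsProj D p)
    (t : K) : LinearMap.det (p + t • (LinearMap.id - p)) = t ^ Module.finrank K (E ⧸ D) := by
  let e := D.prodEquivOfIsCompl (LinearMap.ker p) hp.isCompl
  have hconj : p + t • (LinearMap.id - p) =
      e.toLinearMap ∘ₗ LinearMap.prodMap LinearMap.id (t • LinearMap.id) ∘ₗ
        e.symm.toLinearMap := by
    rw [← LinearMap.comp_assoc, LinearEquiv.eq_comp_toLinearMap_symm]
    ext x
    · simp [e, hp.map_id]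
    · simp [e]
  rw [hconj, LinearMap.det_conj, LinearMap.det_prodMap, LinearMap.det_id, LinearMap.det_smul,
    LinearMap.det_id, one_mul, mul_one,
    (Submodule.quotientEquivOfIsCompl D _ hp.isCompl).finrank_eq]

variable {E : Type*} [AddCommGroup E] [Module ℝ E] [TopologicalSpace E]
  {D : Submodule ℝ E} {p : E →L[ℝ] E}

theorem apply_sub_self_of_isProj (hp : LinearMap.IsProj D p) (x : E) : p (x - p x) = 0 := by
  rw [map_sub, hp.map_id _ (hp.map_mem x), sub_self]

variable [IsTopologicalAddGroup E] [ContinuousSMul ℝ E]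

/-- For a projection `p`, the linear map that fixes the range of `p` and multiplies its kernel by
`t`. -/
def transverseScaling (p : E →L[ℝ] E) (t : ℝ) : E →L[ℝ] E :=
  p + t • (ContinuousLinearMap.id ℝ E - p)

theorem transverseScaling_apply (p : E →L[ℝ] E) (t : ℝ) (x : E) :
    transverseScaling p t x = p x + t • (x - p x) := rfl

theorem apply_transverseScaling (hp : LinearMap.IsProj D p) (t : ℝ) (x : E) :
    p (transverseScaling p t x) = p x := by
  rw [transverseScaling_apply, map_add, map_smul, apply_sub_self_of_isProj hp, smul_zero, add_zero,
    hp.map_id _ (hp.map_mem x)]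

end Scaling

section BlowUp

variable {E I : Type*} [AddCommGroup E] [Module ℝ E] [TopologicalSpace E]
  {l : I → E →L[ℝ] ℝ} {a d : I → ℝ} {p : E →L[ℝ] E}

/-- The limit of the rescaled polyhedra `transverseScaling p t ⁻¹' polyhedron l (a + t • d)` as
`t → 0⁺`, up to a null set: it fibres over `polyhedron l a`, and the fibres are cut out by the
constraints active at the origin. -/
def blowUp (l : I → E →L[ℝ] ℝ) (a d : I → ℝ) (p : E →L[ℝ] E) : Set E :=
  {x | ∀ i, l i (p x) ≤ a i ∧ (a i = 0 → l i x ≤ d i)}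

theorem isClosed_blowUp (l : I → E →L[ℝ] ℝ) (a d : I → ℝ) (p : E →L[ℝ] E) :
    IsClosed (blowUp l a d p) := by
  simp only [blowUp, ofPred_forall, ofPred_and]
  exact isClosed_iInter fun i ↦ (isClosed_le (by fun_prop) continuous_const).inter
    (isClosed_iInter fun _ ↦ isClosed_le (by fun_prop) continuous_const)

theorem apply_proj_of_active (hp : LinearMap.IsProj (activeKernel l a) p) {i : I} (hi : a i = 0)
    (x : E) : l i (p x) = 0 :=
  mem_activeKernel.1 (hp.map_mem x) i hi

variable [IsTopologicalAddGroup E]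

theorem measure_blowUp_pos [MeasurableSpace E] (μ : Measure E) [μ.IsOpenPosMeasure] [Finite I]
    (ha : ∀ i, 0 ≤ a i) (hp : LinearMap.IsProj (activeKernel l a) p)
    (hfull : (interior (polyhedron l (a + d))).Nonempty) : 0 < μ (blowUp l a d p) := by
  obtain ⟨z, hz⟩ := hfull
  let U : Set E := {x | ∀ i, a i ≠ 0 → l i (p x) < a i}
  have hU : IsOpen U := by
    simp only [U, ofPred_forall]
    exact isOpen_iInter_of_finite fun i ↦ isOpen_iInter_of_finite fun _ ↦
      isOpen_lt (by fun_prop) continuous_const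
  let V : Set E := (fun x ↦ x + p z) ⁻¹' interior (polyhedron l (a + d))
  have hV : IsOpen V := isOpen_interior.preimage (by fun_prop)
  have hsub : U ∩ V ⊆ blowUp l a d p := by
    rintro x ⟨hxU, hxV⟩ i
    refine ⟨?_, fun hi ↦ ?_⟩
    · by_cases hi : a i = 0
      · rw [apply_proj_of_active hp hi, hi]
      · exact (hxU i hi).le
    · simpa [hi, apply_proj_of_active hp hi] using interior_subset hxV i
  refine ((hU.inter hV).measure_pos μ ⟨z - p z, fun i hi ↦ ?_, ?_⟩).trans_le (measure_mono hsub)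
  · rw [apply_sub_self_of_isProj hp, map_zero]
    exact (ha i).lt_of_ne' hi
  · simpa [V] using hz

variable [ContinuousSMul ℝ E]

theorem apply_transverseScaling_of_active (hp : LinearMap.IsProj (activeKernel l a) p) {i : I}
    (hi : a i = 0) (t : ℝ) (x : E) : l i (transverseScaling p t x) = t * l i x := by
  simp [transverseScaling_apply, apply_proj_of_active hp hi]

theorem eventually_le_iff_of_tendsto {α β : Type*} [LinearOrder α] [TopologicalSpace α]
    [OrderTopology α] {L : Filter β} {f g : β → α} {y z : α} (hf : Tendsto f L (𝓝 y))
    (hg : Tendsto g L (𝓝 z)) (hne : y ≠ z) : ∀ᶠ t in L, f t ≤ g t ↔ y ≤ z := by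
  rcases hne.lt_or_gt with h | h
  · exact (hf.eventually_lt hg h).mono fun t ht ↦ iff_of_true ht.le h.le
  · exact (hg.eventually_lt hf h).mono fun t ht ↦ iff_of_false ht.not_ge h.not_ge

theorem eventually_transverseScaling_le_iff (hp : LinearMap.IsProj (activeKernel l a) p) {i : I}
    {x : E} (hx : a i ≠ 0 → l i (p x) ≠ a i) :
    ∀ᶠ t : ℝ in 𝓝[>] 0, l i (transverseScaling p t x) ≤ a i + t * d i ↔
      l i (p x) ≤ a i ∧ (a i = 0 → l i x ≤ d i) := by
  by_cases hi : a i = 0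
  · filter_upwards [self_mem_nhdsWithin] with t ht
    have ht : 0 < t := ht
    simp [apply_transverseScaling_of_active hp hi, apply_proj_of_active hp hi, hi, ht]
  · have hl : Tendsto (fun t ↦ l i (transverseScaling p t x)) (𝓝[>] 0) (𝓝 (l i (p x))) := by
      simp only [transverseScaling_apply]
      exact tendsto_nhdsWithin_of_tendsto_nhds (Continuous.tendsto' (by fun_prop) _ _ (by simp))
    have hr : Tendsto (fun t ↦ a i + t * d i) (𝓝[>] 0) (𝓝 (a i)) :=
      tendsto_nhdsWithin_of_tendsto_nhds (Continuous.tendsto' (by fun_prop) _ _ (by simp))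
    simpa [hi] using eventually_le_iff_of_tendsto hl hr (hx hi)

end BlowUp

section Bounded

variable {E I : Type*} [NormedAddCommGroup E] [NormedSpace ℝ E] [FiniteDimensional ℝ E]
  {l : I → E →L[ℝ] ℝ} {a d : I → ℝ} {p : E →L[ℝ] E}

theorem isBounded_transverse_slice [Finite I] (ha : ∀ i, 0 ≤ a i)
    (hrel : polyhedron l a ⊆ activeKernel l a) (hp : LinearMap.IsProj (activeKernel l a) p) :
    IsBounded {u | p u = 0 ∧ ∀ i, a i = 0 → l i u ≤ d i} := by
  let N := LinearMap.ker (p : E →ₗ[ℝ] E)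
  let lN (i : {i // a i = 0}) : N →L[ℝ] ℝ := (l i).comp N.subtypeL
  have htrivial : polyhedron lN 0 ⊆ {0} := fun u hu ↦ by
    obtain ⟨s, hs, hsu⟩ := exists_pos_smul_mem_polyhedron ha fun i hi ↦ hu ⟨i, hi⟩
    have huD : (u : E) ∈ activeKernel l a := (Submodule.smul_mem_iff _ hs.ne').1 (hrel hsu)
    exact Subtype.ext ((hp.map_id _ huD).symm.trans u.2)
  have hbdd := isBounded_polyhedron_of_subset_singleton htrivial fun i ↦ d i
  refine (N.subtypeL.lipschitz.isBounded_image hbdd).subset ?_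
  rintro u ⟨hpu, hu⟩
  exact ⟨⟨u, hpu⟩, fun i ↦ hu i i.2, rfl⟩

theorem exists_isBounded_preimage_transverseScaling_subset [Finite I] (ha : ∀ i, 0 ≤ a i)
    (hrel : polyhedron l a ⊆ activeKernel l a) (hb : IsBounded (polyhedron l a))
    (hp : LinearMap.IsProj (activeKernel l a) p) (d : I → ℝ) :
    ∃ B : Set E, IsBounded B ∧
      ∀ t ∈ Ioc (0 : ℝ) 1, transverseScaling p t ⁻¹' polyhedron l (a + t • d) ⊆ B := by
  have hzero : (0 : E) ∈ polyhedron l a := fun i ↦ by simpa using ha i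
  have hW : IsBounded (polyhedron l (a + |d|)) :=
    isBounded_polyhedron_of_subset_singleton ((isBounded_polyhedron_iff ⟨0, hzero⟩).1 hb) _
  refine ⟨_, (p.lipschitz.isBounded_image hW).add (isBounded_transverse_slice (d := d) ha hrel hp),
    fun t ht x hx ↦ ⟨p x, ⟨transverseScaling p t x, fun i ↦ ?_, apply_transverseScaling hp t x⟩,
      x - p x, ⟨apply_sub_self_of_isProj hp x, fun i hi ↦ ?_⟩, add_sub_cancel _ _⟩⟩
  · calc l i (transverseScaling p t x) ≤ a i + t * d i := hx i
      _ ≤ a i + t * |d i| := by gcongr; exacts [ht.1.le, le_abs_self _]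
      _ ≤ a i + |d i| := by gcongr; exact mul_le_of_le_one_left (abs_nonneg _) ht.2
  · have hxi : t * l i x ≤ t * d i := by
      simpa [apply_transverseScaling_of_active hp hi, hi] using hx i
    rw [map_sub, apply_proj_of_active hp hi, sub_zero]
    exact le_of_mul_le_mul_left hxi ht.1

end Bounded

section Measure

variable {E I : Type*} [NormedAddCommGroup E] [NormedSpace ℝ E] [FiniteDimensional ℝ E]
  [MeasurableSpace E] [BorelSpace E] (μ : Measure E) [μ.IsAddHaarMeasure]
  {l : I → E →L[ℝ] ℝ} {a d : I → ℝ} {p : E →L[ℝ] E}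

theorem addHaar_setOf_eq_of_ne_zero (f : E →ₗ[ℝ] ℝ) {r : ℝ} (hr : r ≠ 0) :
    μ {x | f x = r} = 0 := by
  let s : AffineSubspace ℝ E := (AffineSubspace.mk' r ⊥).comap f.toAffineMap
  have hs : (s : Set E) = {x | f x = r} := by
    ext x
    simp [s, AffineSubspace.mem_mk', sub_eq_zero]
  rw [← hs]
  refine Measure.addHaar_affineSubspace μ s fun htop ↦ hr ?_
  have hzero : (0 : E) ∈ (s : Set E) := htop ▸ mem_univ _
  rw [hs] at hzero
  simpa using hzero.symm

theorem ae_eventually_mem_preimage_iff_mem_blowUp [Finite I]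
    (hp : LinearMap.IsProj (activeKernel l a) p) :
    ∀ᵐ x ∂μ, ∀ᶠ t : ℝ in 𝓝[>] 0,
      x ∈ transverseScaling p t ⁻¹' polyhedron l (a + t • d) ↔ x ∈ blowUp l a d p := by
  have hgeneric : ∀ᵐ x ∂μ, ∀ i, a i ≠ 0 → l i (p x) ≠ a i := by
    refine ae_all_iff.2 fun i ↦ ?_
    by_cases hi : a i = 0
    · simp [hi]
    · simpa [hi, ae_iff] using addHaar_setOf_eq_of_ne_zero μ ((l i).comp p : E →ₗ[ℝ] ℝ) hi
  filter_upwards [hgeneric] with x hx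
  filter_upwards [eventually_all.2 fun i ↦ eventually_transverseScaling_le_iff (d := d) hp (hx i)]
    with t ht using forall_congr' ht

theorem measureReal_preimage_transverseScaling {D : Submodule ℝ E} (hp : LinearMap.IsProj D p)
    {t : ℝ} (ht : 0 < t) (s : Set E) :
    μ.real (transverseScaling p t ⁻¹' s) = μ.real s / t ^ Module.finrank ℝ (E ⧸ D) := by
  have hdet : LinearMap.det (transverseScaling p t : E →ₗ[ℝ] E) =
      t ^ Module.finrank ℝ (E ⧸ D) :=
    det_add_smul_id_sub_of_isProj (p := (p : E →ₗ[ℝ] E)) ⟨hp.map_mem, hp.map_id⟩ t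
  have hpow : 0 < t ^ Module.finrank ℝ (E ⧸ D) := pow_pos ht _
  rw [measureReal_def, Measure.addHaar_preimage_continuousLinearMap μ (hdet ▸ hpow.ne'), hdet,
    abs_of_pos (inv_pos.2 hpow), ENNReal.toReal_mul, ENNReal.toReal_ofReal (inv_pos.2 hpow).le,
    ← measureReal_def, inv_mul_eq_div]

theorem tendsto_measure_preimage_transverseScaling [Finite I] (ha : ∀ i, 0 ≤ a i)
    (hrel : polyhedron l a ⊆ activeKernel l a) (hb : IsBounded (polyhedron l a))
    (hp : LinearMap.IsProj (activeKernel l a) p) (d : I → ℝ) :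
    μ (blowUp l a d p) ≠ ⊤ ∧
    Tendsto (fun t : ℝ ↦ μ (transverseScaling p t ⁻¹' polyhedron l (a + t • d))) (𝓝[>] 0)
      (𝓝 (μ (blowUp l a d p))) := by
  obtain ⟨B, hB, hsub⟩ := exists_isBounded_preimage_transverseScaling_subset ha hrel hb hp d
  have hsub' : ∀ᶠ t : ℝ in 𝓝[>] 0,
      transverseScaling p t ⁻¹' polyhedron l (a + t • d) ⊆ closure B := by
    filter_upwards [Ioc_mem_nhdsGT one_pos] with t ht using (hsub t ht).trans subset_closure
  have hBfin : μ (closure B) ≠ ⊤ := hB.closure.measure_lt_top.ne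
  have hlim := tendsto_measure_of_ae_tendsto_indicator (𝓝[>] (0 : ℝ))
    (isClosed_blowUp l a d p).measurableSet
    (fun t : ℝ ↦ ((isClosed_polyhedron l (a + t • d)).preimage
      (transverseScaling p t).continuous).measurableSet)
    isClosed_closure.measurableSet hBfin hsub' (ae_eventually_mem_preimage_iff_mem_blowUp μ hp)
  exact ⟨ne_top_of_le_ne_top hBfin
    (le_of_tendsto hlim (hsub'.mono fun t ht ↦ measure_mono ht)), hlim⟩

theorem exists_tendsto_measureReal_polyhedron_div_pow [Finite I] (ha : ∀ i, 0 ≤ a i)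
    (hrel : polyhedron l a ⊆ activeKernel l a) (hb : IsBounded (polyhedron l a))
    (hfull : (interior (polyhedron l (a + d))).Nonempty) :
    ∃ V₀ : ℝ, 0 < V₀ ∧
      Tendsto (fun t : ℝ ↦ μ.real (polyhedron l (a + t • d)) /
        t ^ Module.finrank ℝ (E ⧸ activeKernel l a)) (𝓝[>] 0) (𝓝 V₀) := by
  obtain ⟨q, hq⟩ := Submodule.ClosedComplemented.of_finiteDimensional (activeKernel l a)
  let p : E →L[ℝ] E := (activeKernel l a).subtypeL.comp q
  have hp : LinearMap.IsProj (activeKernel l a) p :=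
    ⟨fun x ↦ (q x).2, fun x hx ↦ congrArg Subtype.val (hq ⟨x, hx⟩)⟩
  obtain ⟨hfin, hlim⟩ := tendsto_measure_preimage_transverseScaling μ ha hrel hb hp d
  refine ⟨μ.real (blowUp l a d p), ENNReal.toReal_pos (measure_blowUp_pos μ ha hp hfull).ne' hfin,
    ((ENNReal.tendsto_toReal hfin).comp hlim).congr' ?_⟩
  filter_upwards [self_mem_nhdsWithin] with t ht
  exact measureReal_preimage_transverseScaling μ hp ht _

theorem volume_vanishing_order_eq_codim_general [Finite I] (g : I → E →ᵃ[ℝ] ℝ) (c d : I → ℝ)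
    (hbdd : IsBounded (polyhedron g c)) (hne : (polyhedron g c).Nonempty)
    (hfull : (interior (polyhedron g (c + d))).Nonempty) :
    ∃ V₀ : ℝ, 0 < V₀ ∧
      Tendsto (fun t : ℝ ↦ μ.real (polyhedron g (c + t • d)) /
        t ^ Module.finrank ℝ (E ⧸ (affineSpan ℝ (polyhedron g c)).direction)) (𝓝[>] 0) (𝓝 V₀) := by
  obtain ⟨x, l, a, ha, hrel, htranslate⟩ := exists_polyhedron_eq_vadd_of_nonempty hne
  have hc : polyhedron g c = x +ᵥ polyhedron l a := by simpa using htranslate 0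
  have hbdd' : IsBounded (polyhedron l a) := by
    simpa [hc] using hbdd.vadd (-x)
  have hfull' : (interior (polyhedron l (a + d))).Nonempty := by
    rwa [htranslate, interior_vadd, vadd_set_nonempty] at hfull
  rw [direction_affineSpan, hc, vectorSpan_vadd, vectorSpan_polyhedron_eq_activeKernel ha hrel]
  simp only [htranslate, measureReal_def, measure_vadd]
  exact exists_tendsto_measureReal_polyhedron_div_pow μ ha hrel hbdd' hfull'

end Measure

/-- For a family of polytopes `P_t = {x : g_i(x) ≤ c_i + t·d_i}` interpolating between a
full-dimensional polytope `P_1` and a degenerate polytope `P_0` whose affine span has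
codimension `k`, the volume satisfies `Vol(P_t) = t^k (V₀ + O(t))` with `V₀ > 0` as
`t → 0⁺`; in particular the vanishing order of `Vol(P_t)` at `t = 0` equals the codimension
of the affine span of `P_0`. -/
theorem volume_vanishing_order_eq_codim (n k : ℕ) (hk : k ≤ n) {I : Type*} [Fintype I]
    (g : I → ((Fin n → ℝ) →ᵃ[ℝ] ℝ)) (c d : I → ℝ)
    (P : ℝ → Set (Fin n → ℝ))
    (hP : ∀ t, P t = {x | ∀ i, g i x ≤ c i + t * d i})
    (hbdd : ∀ t ∈ Set.Icc (0:ℝ) 1, Bornology.IsBounded (P t))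
    (hfull : (interior (P 1)).Nonempty)
    (hne : (P 0).Nonempty)
    (hcodim : Module.finrank ℝ (affineSpan ℝ (P 0)).direction = n - k) :
    ∃ V₀ : ℝ, 0 < V₀ ∧
      Filter.Tendsto (fun t : ℝ => (volume (P t)).toReal / t ^ k)
        (nhdsWithin 0 (Set.Ioi 0)) (nhds V₀) := by
  have hpoly (t : ℝ) : P t = polyhedron g (c + t • d) := hP t
  have hP₀ : P 0 = polyhedron g c := by simp [hpoly]
  have hbdd₀ : IsBounded (P 0) := hbdd 0 (by simp)
  have hquot : Module.finrank ℝ ((Fin n → ℝ) ⧸ (affineSpan ℝ (P 0)).direction) = k := by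
    rw [Submodule.finrank_quotient, hcodim, Module.finrank_fin_fun, Nat.sub_sub_self hk]
  rw [hP₀] at hbdd₀ hne hquot
  rw [hpoly, one_smul] at hfull
  simpa only [hpoly, hquot, measureReal_def] using
    volume_vanishing_order_eq_codim_general volume g c d hbdd₀ hne hfull
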